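/- Let u be a minimizer of TV over BV_{⋄,1} = {v ∈ BV(ℝ²) : ∫_Ω v = 0, v ≡ 1 on Ω_s, v ≡ 0 outside Ω}. Then u ≤ 1 almost everywhere. -/

import Mathlib

open MeasureTheory Real Set Filter

noncomputable section

abbrev E2 := EuclideanSpace ℝ (Fin 2)

/-- Divergence of a vector field on the plane. -/
def div2 (z : E2 → E2) (x : E2) : ℝ := ∑ i : Fin 2, fderiv ℝ z x (EuclideanSpace.single i 1) i

/-- The dual set defining the total variation. -/
def tvSet (u : E2 → ℝ) : Set ℝ :=
  {y | ∃ z : E2 → E2, ContDiff ℝ (⊤ : ℕ∞) z ∧ HasCompactSupport z ∧ (∀ x, ‖z x‖ ≤ 1) ∧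
        y = ∫ x, u x * div2 z x}

/-- Total variation of a function on ℝ². -/
def TV (u : E2 → ℝ) : ℝ := sSup (tvSet u)

/-- `u` has bounded variation. -/
def HasBV (u : E2 → ℝ) : Prop := BddAbove (tvSet u)

/-- Perimeter of a set. -/
def Per (A : Set E2) : ℝ := TV (A.indicator 1)

/-- `A` has finite perimeter. -/
def FinPer (A : Set E2) : Prop := HasBV (A.indicator 1)

/-- Lebesgue measure as a real number. -/
def volR (A : Set E2) : ℝ := (volume A).toReal

/-- Cheeger constant of a domain `D`. -/
def cheegerConst (D : Set E2) : ℝ :=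
  sInf {q : ℝ | ∃ A : Set E2, MeasurableSet A ∧ FinPer A ∧ A ⊆ D ∧ 0 < volR A ∧ q = Per A / volR A}

/-- `A` is a Cheeger set of `D`. -/
def IsCheegerSet (D A : Set E2) : Prop :=
  MeasurableSet A ∧ FinPer A ∧ A ⊆ D ∧ 0 < volR A ∧ Per A / volR A = cheegerConst D

/-- The admissible class `BV_{⋄,1}`. -/
def Admissible (Ω Ωs : Set E2) (v : E2 → ℝ) : Prop :=
  Integrable v volume ∧ HasBV v ∧ (∫ x in Ω, v x) = 0 ∧
    (∀ x ∈ Ωs, v x = 1) ∧ ∀ x ∉ Ω, v x = 0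

/-!
For monotone `1`-Lipschitz `F`, the coarea formula gives `TV (F ∘ u) + TV (u - F ∘ u) = TV u`. Only
the inequality `≤` is needed, and duality yields it: for smooth `u` and `F`, testing `F ∘ u` with
`z` and `u - F ∘ u` with `w` amounts to testing `u` with the convex combination
`F'(u) z + (1 - F'(u)) w`; the general case follows by mollifying both `u` and `F`.

Apply this to `F(t) = min(t⁺, 1) - c t⁻`, where `c ∈ [0, 1]` is chosen so that `F ∘ u` has mean
zero. Then `F ∘ u` is a competitor, minimality gives `TV (u - F ∘ u) ≤ 0`, and an integrable
function on the plane without variation vanishes. Hence `u = F ∘ u ≤ 1` almost everywhere.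
-/

open scoped Convolution ContDiff NNReal Topology
open ContinuousLinearMap (lsmul lsmul_apply)

section Mollification

lemma exists_seq_contDiffBump_tendsto_rOut {E : Type*} [NormedAddCommGroup E] :
    ∃ φ : ℕ → ContDiffBump (0 : E), Tendsto (fun n => (φ n).rOut) atTop (𝓝 0) :=
  ⟨fun n => ⟨1 / (n + 1) / 2, 1 / (n + 1), by positivity, half_lt_self (by positivity)⟩,
    tendsto_one_div_add_atTop_nhds_zero_nat⟩

variable {ι E F : Type*} [NormedAddCommGroup E] [NormedSpace ℝ E] [FiniteDimensional ℝ E]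
  [MeasurableSpace E] [BorelSpace E] {μ : Measure E} [μ.IsAddHaarMeasure]
  [NormedAddCommGroup F] [NormedSpace ℝ F]

lemma integral_convolution_mul_of_even {ρ u ψ : E → ℝ} {C : ℝ} (hρ : Integrable ρ μ)
    (hρ_even : ρ.Even) (hu : Integrable u μ) (hψ : AEStronglyMeasurable ψ μ)
    (hC : ∀ x, ‖ψ x‖ ≤ C) :
    ∫ x, (ρ ⋆[lsmul ℝ ℝ, μ] u) x * ψ x ∂μ = ∫ x, u x * (ρ ⋆[lsmul ℝ ℝ, μ] ψ) x ∂μ := by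
  have hint : Integrable (fun p : E × E => ψ p.1 * (u p.2 * ρ (p.1 - p.2))) (μ.prod μ) :=
    (hu.convolution_integrand (lsmul ℝ ℝ) hρ).bdd_mul hψ.comp_fst (ae_of_all _ fun p => hC p.1)
  calc ∫ x, (ρ ⋆[lsmul ℝ ℝ, μ] u) x * ψ x ∂μ
      = ∫ x, ∫ y, ψ x * (u y * ρ (x - y)) ∂μ ∂μ := by
        congr! 2 with x
        rw [convolution_eq_swap, ← integral_mul_const]
        refine integral_congr_ae (ae_of_all _ fun y => ?_)
        simp only [lsmul_apply, smul_eq_mul]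
        ring
    _ = ∫ y, ∫ x, ψ x * (u y * ρ (x - y)) ∂μ ∂μ := integral_integral_swap hint
    _ = ∫ y, u y * (ρ ⋆[lsmul ℝ ℝ, μ] ψ) y ∂μ := by
        congr! 2 with y
        rw [convolution_eq_swap, ← integral_const_mul]
        refine integral_congr_ae (ae_of_all _ fun x => ?_)
        simp only [lsmul_apply, smul_eq_mul]
        rw [← hρ_even (y - x), neg_sub]
        ring

lemma normed_convolution_sub (φ : ContDiffBump (0 : E)) {f g : E → F}
    (hf : LocallyIntegrable f μ) (hg : LocallyIntegrable g μ) :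
    φ.normed μ ⋆[lsmul ℝ ℝ, μ] (f - g) =
      φ.normed μ ⋆[lsmul ℝ ℝ, μ] f - φ.normed μ ⋆[lsmul ℝ ℝ, μ] g := by
  ext x
  have hexists {h : E → F} (hh : LocallyIntegrable h μ) :
      ConvolutionExistsAt (φ.normed μ) h x (lsmul ℝ ℝ) μ :=
    φ.hasCompactSupport_normed.convolutionExists_left _ φ.continuous_normed hh x
  simp only [convolution_def, Pi.sub_apply, map_sub]
  exact integral_sub (hexists hf) (hexists hg)

lemma integral_norm_normed_convolution_le (φ : ContDiffBump (0 : E)) {v : E → F}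
    (hv : Integrable v μ) :
    ∫ x, ‖(φ.normed μ ⋆[lsmul ℝ ℝ, μ] v) x‖ ∂μ ≤ ∫ x, ‖v x‖ ∂μ := by
  have hφ : Integrable (φ.normed μ) μ := φ.integrable_normed
  calc ∫ x, ‖(φ.normed μ ⋆[lsmul ℝ ℝ, μ] v) x‖ ∂μ
      ≤ ∫ x, (φ.normed μ ⋆[lsmul ℝ ℝ, μ] fun y => ‖v y‖) x ∂μ := by
        refine integral_mono (hφ.integrable_convolution _ hv).norm
          (hφ.integrable_convolution _ hv.norm) fun x => ?_
        refine (norm_integral_le_integral_norm _).trans_eq ?_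
        simp only [convolution_def, lsmul_apply, norm_smul, smul_eq_mul,
          norm_of_nonneg (φ.nonneg_normed _)]
    _ = ∫ x, ‖v x‖ ∂μ := by
        rw [integral_convolution _ hφ hv.norm, φ.integral_normed, lsmul_apply, one_smul]

variable [CompleteSpace F]

lemma norm_normed_convolution_le (φ : ContDiffBump (0 : E)) {g : E → F} {C : ℝ}
    (hg : AEStronglyMeasurable g μ) (hC : ∀ x, ‖g x‖ ≤ C) (x : E) :
    ‖(φ.normed μ ⋆[lsmul ℝ ℝ, μ] g) x‖ ≤ C := by
  simpa using dist_convolution_le (x₀ := x) (z₀ := 0) ((norm_nonneg _).trans (hC 0))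
    φ.support_normed_eq.subset φ.nonneg_normed φ.integral_normed hg fun y _ => by simpa using hC y

variable {l : Filter ι} [l.IsCountablyGenerated] {φ : ι → ContDiffBump (0 : E)}

lemma tendsto_integral_norm_normed_convolution_sub_of_hasCompactSupport
    (hφ : Tendsto (fun i => (φ i).rOut) l (𝓝 0)) {w : E → F} (hw : Continuous w)
    (hwc : HasCompactSupport w) :
    Tendsto (fun i => ∫ x, ‖((φ i).normed μ ⋆[lsmul ℝ ℝ, μ] w) x - w x‖ ∂μ) l (𝓝 0) := by
  obtain ⟨C, hC⟩ := hw.bounded_above_of_compact_support hwc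
  set K := Metric.cthickening 1 (tsupport w)
  have hK : IsCompact K := hwc.isCompact.cthickening
  have hzero {x y : E} (hx : x ∉ K) (hxy : dist y x ≤ 1) : w y = 0 :=
    image_eq_zero_of_notMem_tsupport fun hy =>
      hx (Metric.mem_cthickening_of_dist_le x y 1 _ hy (dist_comm x y ▸ hxy))
  rw [← integral_zero E ℝ (μ := μ)]
  refine tendsto_integral_filter_of_dominated_convergence (K.indicator fun _ => C + C)
    (.of_forall fun i => ?_) ?_ ?_ (ae_of_all _ fun x => ?_)
  · exact (((φ i).hasCompactSupport_normed.continuous_convolution_left _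
      (φ i).continuous_normed hw.locallyIntegrable).sub hw).norm.aestronglyMeasurable
  · filter_upwards [hφ.eventually_le_const one_pos] with i hi
    refine ae_of_all _ fun x => ?_
    rw [norm_norm]
    by_cases hx : x ∈ K
    · rw [indicator_of_mem hx]
      exact (norm_sub_le _ _).trans
        (add_le_add (norm_normed_convolution_le (φ i) hw.aestronglyMeasurable hC x) (hC x))
    · have hwx : w x = 0 := hzero hx (by simp)
      rw [indicator_of_notMem hx, (φ i).normed_convolution_eq_right fun y hy => ?_, sub_self,
        norm_zero]
      rw [hwx, hzero hx ((Metric.mem_ball.1 hy).le.trans hi)]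
  · exact (integrable_indicator_iff hK.measurableSet).2
      (integrableOn_const hK.measure_lt_top.ne)
  · simpa using
      (((ContDiffBump.convolution_tendsto_right_of_continuous hφ hw x).sub_const (w x)).norm)

theorem tendsto_integral_norm_normed_convolution_sub
    (hφ : Tendsto (fun i => (φ i).rOut) l (𝓝 0)) {u : E → F} (hu : Integrable u μ) :
    Tendsto (fun i => ∫ x, ‖((φ i).normed μ ⋆[lsmul ℝ ℝ, μ] u) x - u x‖ ∂μ) l (𝓝 0) := by
  refine tendsto_order.2 ⟨fun a ha => .of_forall fun i =>
    ha.trans_le (integral_nonneg fun _ => norm_nonneg _), fun ε hε => ?_⟩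
  obtain ⟨w, hwc, huw, hw, hwi⟩ :=
    hu.exists_hasCompactSupport_integral_sub_le (ε := ε / 3) (by positivity)
  filter_upwards [(tendsto_integral_norm_normed_convolution_sub_of_hasCompactSupport (μ := μ) hφ hw
    hwc).eventually_lt_const (show 0 < ε / 3 by positivity)] with i hi
  set A := fun v : E → F => (φ i).normed μ ⋆[lsmul ℝ ℝ, μ] v
  have hA {v : E → F} (hv : Integrable v μ) : Integrable (A v) μ :=
    (φ i).integrable_normed.integrable_convolution _ hv
  have hsplit (x : E) : ‖A u x - u x‖ ≤ ‖A (u - w) x‖ + ‖A w x - w x‖ + ‖u x - w x‖ := by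
    have : A u x - u x = A (u - w) x + (A w x - w x) - (u x - w x) := by
      simp only [A, normed_convolution_sub (φ i) hu.locallyIntegrable hwi.locallyIntegrable,
        Pi.sub_apply]
      abel
    rw [this]
    exact (norm_sub_le _ _).trans (by gcongr; exact norm_add_le _ _)
  have huwi : Integrable (fun x => ‖u x - w x‖) μ := (hu.sub hwi).norm
  have hint₁ : Integrable (fun x => ‖A (u - w) x‖) μ := (hA (hu.sub hwi)).norm
  have hint₂ : Integrable (fun x => ‖A w x - w x‖) μ := ((hA hwi).sub hwi).norm
  have hint₁₂ : Integrable (fun x => ‖A (u - w) x‖ + ‖A w x - w x‖) μ := hint₁.add hint₂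
  calc ∫ x, ‖A u x - u x‖ ∂μ
      ≤ ∫ x, ‖A (u - w) x‖ + ‖A w x - w x‖ + ‖u x - w x‖ ∂μ :=
        integral_mono ((hA hu).sub hu).norm (hint₁₂.add huwi) hsplit
    _ = (∫ x, ‖A (u - w) x‖ ∂μ) + (∫ x, ‖A w x - w x‖ ∂μ) + ∫ x, ‖u x - w x‖ ∂μ := by
        rw [integral_add hint₁₂ huwi, integral_add hint₁ hint₂]
    _ < ε / 3 + ε / 3 + ε / 3 :=
        add_lt_add_of_lt_of_le (add_lt_add_of_le_of_lt
          ((integral_norm_normed_convolution_le (φ i) (hu.sub hwi)).trans huw) hi) huw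
    _ = ε := by ring


lemma lipschitzWith_normed_convolution (φ : ContDiffBump (0 : E)) {f : E → F} {K : ℝ≥0}
    (hf : LipschitzWith K f) : LipschitzWith K (φ.normed μ ⋆[lsmul ℝ ℝ, μ] f) := by
  refine LipschitzWith.of_dist_le_mul fun x y => ?_
  set τf : E → F := fun s => f (s + (y - x)) with hτf
  have hτ_cont : Continuous τf := hf.continuous.comp (continuous_add_const _)
  have htranslate : (φ.normed μ ⋆[lsmul ℝ ℝ, μ] τf) x = (φ.normed μ ⋆[lsmul ℝ ℝ, μ] f) y := by
    simp only [convolution_def, hτf, show ∀ t, x - t + (y - x) = y - t from fun t => by abel]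
  have hbound (s : E) : ‖(f - τf) s‖ ≤ K * dist x y := by
    refine (dist_eq_norm (f s) (τf s) ▸ hf.dist_le_mul s (s + (y - x))).trans_eq ?_
    rw [dist_self_add_right, dist_eq_norm_sub']
  rw [← htranslate, dist_eq_norm, ← Pi.sub_apply, ← normed_convolution_sub φ
    hf.continuous.locallyIntegrable hτ_cont.locallyIntegrable]
  exact norm_normed_convolution_le φ (hf.continuous.sub hτ_cont).aestronglyMeasurable hbound x

lemma monotone_normed_convolution {μ : Measure ℝ} [μ.IsAddHaarMeasure] (φ : ContDiffBump (0 : ℝ))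
    {f : ℝ → ℝ} (hf : Monotone f) : Monotone (φ.normed μ ⋆[lsmul ℝ ℝ, μ] f) := by
  intro x y hxy
  have hexists : ConvolutionExists (φ.normed μ) f (lsmul ℝ ℝ) μ :=
    φ.hasCompactSupport_normed.convolutionExists_left _ φ.continuous_normed hf.locallyIntegrable
  refine integral_mono (hexists x) (hexists y) fun t => ?_
  exact mul_le_mul_of_nonneg_left (hf (sub_le_sub_right hxy t)) (φ.nonneg_normed t)

end Mollification

section Limits

variable {ι α : Type*} [MeasurableSpace α] {μ : Measure α} {K : ℝ≥0} {C : ℝ} {u d : α → ℝ}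

lemma norm_le_norm_zero_add_of_lipschitzWith {f : ℝ → ℝ} (hf : LipschitzWith K f) (t : ℝ) :
    ‖f t‖ ≤ ‖f 0‖ + K * ‖t‖ := by
  simpa [dist_eq_norm] using norm_le_norm_add_const_of_dist_le (hf.dist_le_mul t 0)

lemma integrable_lipschitz_comp {f : ℝ → ℝ} (hf : LipschitzWith K f) (hf₀ : f 0 = 0)
    (hu : Integrable u μ) : Integrable (fun x => f (u x)) μ :=
  memLp_one_iff_integrable.1 (hf.comp_memLp hf₀ (memLp_one_iff_integrable.2 hu))

lemma integrable_add_mul_norm_mul_norm (a b : ℝ) (hu : Integrable u μ) (hd : Integrable d μ)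
    (hC : ∀ x, ‖d x‖ ≤ C) : Integrable (fun x => (a + b * ‖u x‖) * ‖d x‖) μ := by
  have hud : Integrable (fun x => ‖u x‖ * ‖d x‖) μ :=
    hu.norm.mul_bdd hd.norm.1 (ae_of_all _ fun x => (norm_norm (d x)).trans_le (hC x))
  simp only [add_mul, mul_assoc]
  exact (hd.norm.const_mul a).add (hud.const_mul b)

lemma integrable_lipschitz_comp_mul {f : ℝ → ℝ} (hf : LipschitzWith K f) (hu : Integrable u μ)
    (hd : Integrable d μ) (hC : ∀ x, ‖d x‖ ≤ C) : Integrable (fun x => f (u x) * d x) μ := by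
  refine (integrable_add_mul_norm_mul_norm ‖f 0‖ K hu hd hC).mono'
    ((hf.continuous.comp_aestronglyMeasurable hu.1).mul hd.1) (ae_of_all _ fun x => ?_)
  rw [norm_mul]
  gcongr
  exact norm_le_norm_zero_add_of_lipschitzWith hf (u x)

variable {l : Filter ι} {F : ι → ℝ → ℝ} {f : ℝ → ℝ}

lemma tendsto_integral_lipschitz_comp_mul [l.IsCountablyGenerated]
    (hF : ∀ i, LipschitzWith K (F i)) (hFf : ∀ t, Tendsto (fun i => F i t) l (𝓝 (f t)))
    (hu : Integrable u μ) (hd : Integrable d μ) (hC : ∀ x, ‖d x‖ ≤ C) :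
    Tendsto (fun i => ∫ x, F i (u x) * d x ∂μ) l (𝓝 (∫ x, f (u x) * d x ∂μ)) := by
  refine tendsto_integral_filter_of_dominated_convergence
    (fun x => (‖f 0‖ + 1 + K * ‖u x‖) * ‖d x‖)
    (.of_forall fun i => (integrable_lipschitz_comp_mul (hF i) hu hd hC).1) ?_
    (integrable_add_mul_norm_mul_norm (‖f 0‖ + 1) K hu hd hC)
    (ae_of_all _ fun x => (hFf (u x)).mul_const (d x))
  filter_upwards [(hFf 0).norm.eventually_le_const (lt_add_one ‖f 0‖)] with i hi
  refine ae_of_all _ fun x => ?_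
  rw [norm_mul]
  gcongr
  exact (norm_le_norm_zero_add_of_lipschitzWith (hF i) (u x)).trans (by gcongr)

theorem tendsto_integral_lipschitz_comp_mul_of_tendsto [l.IsCountablyGenerated]
    (hF : ∀ i, LipschitzWith K (F i)) (hFf : ∀ t, Tendsto (fun i => F i t) l (𝓝 (f t)))
    {U : ι → α → ℝ} (hU : ∀ i, Integrable (U i) μ) (hu : Integrable u μ)
    (hUu : Tendsto (fun i => ∫ x, ‖U i x - u x‖ ∂μ) l (𝓝 0)) (hd : Integrable d μ)
    (hC : ∀ x, ‖d x‖ ≤ C) :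
    Tendsto (fun i => ∫ x, F i (U i x) * d x ∂μ) l (𝓝 (∫ x, f (u x) * d x ∂μ)) := by
  have hdiff (i : ι) :
      ‖∫ x, F i (U i x) * d x ∂μ - ∫ x, F i (u x) * d x ∂μ‖ ≤
        K * C * ∫ x, ‖U i x - u x‖ ∂μ := by
    rw [← integral_sub (integrable_lipschitz_comp_mul (hF i) (hU i) hd hC)
      (integrable_lipschitz_comp_mul (hF i) hu hd hC), ← integral_const_mul]
    refine norm_integral_le_of_norm_le (((hU i).sub hu).norm.const_mul _) (ae_of_all _ fun x => ?_)
    calc ‖F i (U i x) * d x - F i (u x) * d x‖ = dist (F i (U i x)) (F i (u x)) * ‖d x‖ := by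
          rw [← sub_mul, norm_mul, dist_eq_norm]
      _ ≤ K * ‖U i x - u x‖ * C := by
          gcongr
          · exact (hF i).dist_le_mul _ _
          · exact hC x
      _ = K * C * ‖U i x - u x‖ := by ring
  have hzero : Tendsto (fun i => ∫ x, F i (U i x) * d x ∂μ - ∫ x, F i (u x) * d x ∂μ) l (𝓝 0) :=
    squeeze_zero_norm hdiff (by simpa using hUu.const_mul (K * C : ℝ))
  simpa using hzero.add (tendsto_integral_lipschitz_comp_mul hF hFf hu hd hC)

end Limits

section Divergence

lemma integral_fderiv_eq_zero {E F : Type*} [NormedAddCommGroup E] [NormedSpace ℝ E]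
    [FiniteDimensional ℝ E] [MeasurableSpace E] [BorelSpace E] {μ : Measure E}
    [μ.IsAddHaarMeasure] [NormedAddCommGroup F] [NormedSpace ℝ F] {g : E → F}
    (hg : ContDiff ℝ 1 g) (hgc : HasCompactSupport g) : ∫ x, fderiv ℝ g x ∂μ = 0 := by
  have hg' : Continuous (fderiv ℝ g) := hg.continuous_fderiv one_ne_zero
  ext v
  have hg'v : Integrable (fun x => fderiv ℝ g x v) μ :=
    (hg'.clm_apply continuous_const).integrable_of_hasCompactSupport (hgc.fderiv_apply ℝ v)
  have hparts := integral_smul_fderiv_eq_neg_fderiv_smul_of_integrable (μ := μ) (v := v)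
    (f := fun _ : E => (1 : ℝ)) (g := g) (by simp) (by simpa using hg'v)
    (by simpa using hg.continuous.integrable_of_hasCompactSupport hgc) (by simp)
    (fun x _ => hg.differentiable one_ne_zero x)
  rw [ContinuousLinearMap.integral_apply (hg'.integrable_of_hasCompactSupport (hgc.fderiv ℝ))]
  simpa using hparts

/-- The trace of endomorphisms of a finite-dimensional space, as a continuous linear functional;
it expresses the divergence of `z` at `x` as the trace of `fderiv ℝ z x`. -/
def traceCLM (E : Type*) [NormedAddCommGroup E] [NormedSpace ℝ E] [FiniteDimensional ℝ E] :
    (E →L[ℝ] E) →L[ℝ] ℝ :=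
  (LinearMap.trace ℝ E ∘ₗ ContinuousLinearMap.coeLM ℝ).toContinuousLinearMap

lemma traceCLM_smulRight {E : Type*} [NormedAddCommGroup E] [NormedSpace ℝ E]
    [FiniteDimensional ℝ E] (f : E →L[ℝ] ℝ) (v : E) : traceCLM E (f.smulRight v) = f v :=
  LinearMap.trace_smulRight (f : E →ₗ[ℝ] ℝ) v

variable {V : E2 → ℝ} {z w : E2 → E2}

lemma div2_eq_traceCLM (z : E2 → E2) (x : E2) : div2 z x = traceCLM E2 (fderiv ℝ z x) := by
  refine Eq.trans ?_ (LinearMap.trace_eq_sum_inner _ (EuclideanSpace.basisFun (Fin 2) ℝ)).symm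
  simp [div2, EuclideanSpace.inner_single_left]

lemma continuous_div2 (hz : ContDiff ℝ 1 z) : Continuous (div2 z) := by
  rw [funext (div2_eq_traceCLM z)]
  exact (traceCLM E2).continuous.comp (hz.continuous_fderiv one_ne_zero)

lemma hasCompactSupport_div2 (hz : HasCompactSupport z) : HasCompactSupport (div2 z) := by
  rw [funext (div2_eq_traceCLM z)]
  exact (hz.fderiv ℝ).comp_left (map_zero _)

lemma div2_add (hz : Differentiable ℝ z) (hw : Differentiable ℝ w) (x : E2) :
    div2 (z + w) x = div2 z x + div2 w x := by
  simp only [div2_eq_traceCLM, fderiv_add (hz x) (hw x), map_add]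

lemma div2_smul (hV : Differentiable ℝ V) (hz : Differentiable ℝ z) (x : E2) :
    div2 (V • z) x = V x * div2 z x + fderiv ℝ V x (z x) := by
  simp only [div2_eq_traceCLM, fderiv_smul (hV x) (hz x), map_add, map_smul, smul_eq_mul,
    traceCLM_smulRight]

lemma div2_normed_convolution (φ : ContDiffBump (0 : E2)) (hz : ContDiff ℝ 1 z)
    (hzc : HasCompactSupport z) (x : E2) :
    div2 (φ.normed volume ⋆[lsmul ℝ ℝ, volume] z) x =
      (φ.normed volume ⋆[lsmul ℝ ℝ, volume] div2 z) x := by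
  have hderiv := hzc.hasFDerivAt_convolution_right (lsmul ℝ ℝ)
    (φ.integrable_normed (μ := volume)).locallyIntegrable hz x
  have hexists := (hzc.fderiv ℝ).convolutionExists_right
    ((lsmul ℝ ℝ : ℝ →L[ℝ] E2 →L[ℝ] E2).precompR E2)
    (φ.integrable_normed (μ := volume)).locallyIntegrable (hz.continuous_fderiv one_ne_zero) x
  rw [div2_eq_traceCLM, hderiv.fderiv, convolution_def, convolution_def,
    ← (traceCLM E2).integral_comp_comm hexists]
  refine integral_congr_ae (ae_of_all _ fun t => ?_)
  simp only [div2_eq_traceCLM, lsmul_apply, smul_eq_mul]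
  exact (traceCLM E2).map_smul (φ.normed volume t) (fderiv ℝ z (x - t))

lemma integral_div2_eq_zero (hz : ContDiff ℝ 1 z) (hzc : HasCompactSupport z) :
    ∫ x, div2 z x = 0 := by
  simp only [div2_eq_traceCLM]
  have hint : Integrable (fderiv ℝ z) :=
    (hz.continuous_fderiv one_ne_zero).integrable_of_hasCompactSupport (hzc.fderiv ℝ)
  rw [(traceCLM E2).integral_comp_comm hint, integral_fderiv_eq_zero hz hzc, map_zero]

lemma integrable_mul_div2 (hV : Continuous V) (hz : ContDiff ℝ 1 z) (hzc : HasCompactSupport z) :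
    Integrable fun x => V x * div2 z x :=
  (hV.mul (continuous_div2 hz)).integrable_of_hasCompactSupport
    (hasCompactSupport_div2 hzc).mul_left

lemma integral_mul_div2_eq_neg (hV : ContDiff ℝ 1 V) (hz : ContDiff ℝ 1 z)
    (hzc : HasCompactSupport z) : ∫ x, V x * div2 z x = -∫ x, fderiv ℝ V x (z x) := by
  have hVz : Integrable fun x => fderiv ℝ V x (z x) :=
    ((hV.continuous_fderiv one_ne_zero).clm_apply hz.continuous).integrable_of_hasCompactSupport
      (hzc.mono fun x hx => by contrapose! hx; simp_all)
  rw [eq_neg_iff_add_eq_zero, ← integral_add (integrable_mul_div2 hV.continuous hz hzc) hVz,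
    ← integral_div2_eq_zero (hV.smul hz) hzc.smul_left]
  exact integral_congr_ae (ae_of_all _ fun x =>
    (div2_smul (hV.differentiable one_ne_zero) (hz.differentiable one_ne_zero) x).symm)

lemma integral_comp_mul_div2 {F : ℝ → ℝ} (hF : ContDiff ℝ 2 F) (hV : ContDiff ℝ 1 V)
    (hz : ContDiff ℝ 1 z) (hzc : HasCompactSupport z) :
    ∫ x, F (V x) * div2 z x = ∫ x, V x * div2 ((deriv F ∘ V) • z) x := by
  have hF' : ContDiff ℝ 1 (deriv F) := hF.deriv'
  have hchain (x : E2) : fderiv ℝ (F ∘ V) x = deriv F (V x) • fderiv ℝ V x :=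
    ((hF.differentiable two_ne_zero (V x)).hasDerivAt.comp_hasFDerivAt x
      (hV.differentiable one_ne_zero x).hasFDerivAt).fderiv
  calc ∫ x, F (V x) * div2 z x = -∫ x, fderiv ℝ (F ∘ V) x (z x) :=
        integral_mul_div2_eq_neg ((hF.of_le one_le_two).comp hV) hz hzc
    _ = -∫ x, fderiv ℝ V x (((deriv F ∘ V) • z) x) := by
        simp only [hchain, FunLike.coe_smul, Pi.smul_apply, Pi.smul_apply', Function.comp_apply,
          map_smul]
    _ = ∫ x, V x * div2 ((deriv F ∘ V) • z) x :=
        (integral_mul_div2_eq_neg hV ((hF'.comp hV).smul hz) hzc.smul_left).symm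

end Divergence

/-- The vector fields tested against in the definition of the total variation. -/
structure IsTestField (z : E2 → E2) : Prop where
  contDiff : ContDiff ℝ ∞ z
  hasCompactSupport : HasCompactSupport z
  norm_le_one (x : E2) : ‖z x‖ ≤ 1

namespace IsTestField

variable {z w : E2 → E2}

lemma contDiff_one (hz : IsTestField z) : ContDiff ℝ 1 z :=
  hz.contDiff.of_le (mod_cast le_top)

lemma zero : IsTestField 0 :=
  ⟨contDiff_const, .zero, by simp⟩

lemma normed_convolution (φ : ContDiffBump (0 : E2)) (hz : IsTestField z) :
    IsTestField (φ.normed volume ⋆[lsmul ℝ ℝ, volume] z) where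
  contDiff := hz.hasCompactSupport.contDiff_convolution_right _
    φ.integrable_normed.locallyIntegrable hz.contDiff
  hasCompactSupport := φ.hasCompactSupport_normed.convolution _ hz.hasCompactSupport
  norm_le_one := norm_normed_convolution_le φ hz.contDiff.continuous.aestronglyMeasurable
    hz.norm_le_one

lemma smul_add_one_sub_smul {p : E2 → ℝ} (hp : ContDiff ℝ ∞ p) (hp₀ : ∀ x, 0 ≤ p x)
    (hp₁ : ∀ x, p x ≤ 1) (hz : IsTestField z) (hw : IsTestField w) :
    IsTestField (p • z + (1 - p) • w) where
  contDiff := (hp.smul hz.contDiff).add ((contDiff_const.sub hp).smul hw.contDiff)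
  hasCompactSupport := hz.hasCompactSupport.smul_left.add hw.hasCompactSupport.smul_left
  norm_le_one x := mem_closedBall_zero_iff.1 <| convex_closedBall 0 1
    (mem_closedBall_zero_iff.2 (hz.norm_le_one x)) (mem_closedBall_zero_iff.2 (hw.norm_le_one x))
    (hp₀ x) (sub_nonneg.2 (hp₁ x)) (add_sub_cancel _ _)

lemma integrable_div2 (hz : IsTestField z) : Integrable (div2 z) :=
  (continuous_div2 hz.contDiff_one).integrable_of_hasCompactSupport
    (hasCompactSupport_div2 hz.hasCompactSupport)

lemma exists_norm_div2_le (hz : IsTestField z) : ∃ C, ∀ x, ‖div2 z x‖ ≤ C :=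
  (continuous_div2 hz.contDiff_one).bounded_above_of_compact_support
    (hasCompactSupport_div2 hz.hasCompactSupport)

end IsTestField

section TotalVariation

variable {u : E2 → ℝ} {z w : E2 → E2} {C : ℝ}

lemma TV_le (h : ∀ z, IsTestField z → ∫ x, u x * div2 z x ≤ C) : TV u ≤ C := by
  refine csSup_le ⟨_, 0, IsTestField.zero.1, IsTestField.zero.2, IsTestField.zero.3, rfl⟩ ?_
  rintro _ ⟨z, hz, hzc, hz₁, rfl⟩
  exact h z ⟨hz, hzc, hz₁⟩

lemma hasBV_of_forall_le (h : ∀ z, IsTestField z → ∫ x, u x * div2 z x ≤ C) : HasBV u := by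
  refine ⟨C, ?_⟩
  rintro _ ⟨z, hz, hzc, hz₁, rfl⟩
  exact h z ⟨hz, hzc, hz₁⟩

lemma HasBV.integral_mul_div2_le_TV (hu : HasBV u) (hz : IsTestField z) :
    ∫ x, u x * div2 z x ≤ TV u :=
  le_csSup hu ⟨z, hz.contDiff, hz.hasCompactSupport, hz.norm_le_one, rfl⟩

lemma HasBV.integral_normed_convolution_mul_div2_le_TV (hu : HasBV u) (hui : Integrable u)
    (φ : ContDiffBump (0 : E2)) (hz : IsTestField z) :
    ∫ x, (φ.normed volume ⋆[lsmul ℝ ℝ, volume] u) x * div2 z x ≤ TV u := by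
  obtain ⟨C, hC⟩ := hz.exists_norm_div2_le
  rw [integral_convolution_mul_of_even φ.integrable_normed φ.normed_neg hui
    hz.integrable_div2.aestronglyMeasurable hC]
  simp only [← div2_normed_convolution φ hz.contDiff_one hz.hasCompactSupport]
  exact hu.integral_mul_div2_le_TV (hz.normed_convolution φ)

lemma exists_isTestField_integral_comp_add_eq {F : ℝ → ℝ} {U : E2 → ℝ} (hF : ContDiff ℝ ∞ F)
    (hF_mono : Monotone F) (hF_lip : LipschitzWith 1 F) (hU : ContDiff ℝ ∞ U)
    (hz : IsTestField z) (hw : IsTestField w) :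
    ∃ ζ, IsTestField ζ ∧
      (∫ x, F (U x) * div2 z x) + ∫ x, (U x - F (U x)) * div2 w x = ∫ x, U x * div2 ζ x := by
  set p : E2 → ℝ := deriv F ∘ U
  have hp : ContDiff ℝ ∞ p := (contDiff_infty_iff_deriv.1 hF).2.comp hU
  have hp₀ (x : E2) : 0 ≤ p x := hF_mono.deriv_nonneg
  have hp₁ (x : E2) : p x ≤ 1 := (le_norm_self _).trans (norm_deriv_le_of_lipschitz hF_lip)
  have hU₁ : ContDiff ℝ 1 U := hU.of_le (mod_cast le_top)
  have hF₂ : ContDiff ℝ 2 F := contDiff_infty.1 hF 2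
  have hp₁' : ContDiff ℝ 1 p := hp.of_le (mod_cast le_top)
  have hderiv_sub : deriv (fun t => t - F t) ∘ U = 1 - p := by
    ext x
    exact ((hasDerivAt_id (U x)).sub (hF₂.differentiable two_ne_zero (U x)).hasDerivAt).deriv
  refine ⟨p • z + (1 - p) • w, hz.smul_add_one_sub_smul hp hp₀ hp₁ hw, ?_⟩
  have hpz : ContDiff ℝ 1 (p • z) := hp₁'.smul hz.contDiff_one
  have hpw : ContDiff ℝ 1 ((1 - p) • w) := (contDiff_const.sub hp₁').smul hw.contDiff_one
  calc (∫ x, F (U x) * div2 z x) + ∫ x, (U x - F (U x)) * div2 w x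
      = (∫ x, U x * div2 (p • z) x) + ∫ x, U x * div2 ((1 - p) • w) x := by
        rw [integral_comp_mul_div2 hF₂ hU₁ hz.contDiff_one hz.hasCompactSupport,
          integral_comp_mul_div2 (F := fun t => t - F t) (contDiff_id.sub hF₂) hU₁
            hw.contDiff_one hw.hasCompactSupport, hderiv_sub]
    _ = ∫ x, U x * div2 (p • z + (1 - p) • w) x := by
        rw [← integral_add (integrable_mul_div2 hU₁.continuous hpz hz.hasCompactSupport.smul_left)
          (integrable_mul_div2 hU₁.continuous hpw hw.hasCompactSupport.smul_left)]
        simp only [← mul_add, div2_add (hpz.differentiable one_ne_zero)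
          (hpw.differentiable one_ne_zero)]

theorem HasBV.integral_comp_add_integral_sub_comp_le_TV (hu : HasBV u) (hui : Integrable u)
    {F : ℝ → ℝ} (hF_mono : Monotone F) (hF_lip : LipschitzWith 1 F) (hz : IsTestField z)
    (hw : IsTestField w) :
    (∫ x, F (u x) * div2 z x) + ∫ x, (u x - F (u x)) * div2 w x ≤ TV u := by
  obtain ⟨φ, hφ⟩ := exists_seq_contDiffBump_tendsto_rOut (E := ℝ)
  obtain ⟨ψ, hψ⟩ := exists_seq_contDiffBump_tendsto_rOut (E := E2)
  obtain ⟨Cz, hCz⟩ := hz.exists_norm_div2_le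
  obtain ⟨Cw, hCw⟩ := hw.exists_norm_div2_le
  set Fn : ℕ → ℝ → ℝ := fun n => (φ n).normed volume ⋆[lsmul ℝ ℝ, volume] F
  set Un : ℕ → E2 → ℝ := fun n => (ψ n).normed volume ⋆[lsmul ℝ ℝ, volume] u
  have hFn_lip (n : ℕ) : LipschitzWith 1 (Fn n) := lipschitzWith_normed_convolution (φ n) hF_lip
  have hFn (n : ℕ) : ContDiff ℝ ∞ (Fn n) :=
    (φ n).hasCompactSupport_normed.contDiff_convolution_left _ (φ n).contDiff_normed
      hF_lip.continuous.locallyIntegrable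
  have hFn_tendsto (t : ℝ) : Tendsto (fun n => Fn n t) atTop (𝓝 (F t)) :=
    ContDiffBump.convolution_tendsto_right_of_continuous hφ hF_lip.continuous t
  have hUn (n : ℕ) : ContDiff ℝ ∞ (Un n) :=
    (ψ n).hasCompactSupport_normed.contDiff_convolution_left _ (ψ n).contDiff_normed
      hui.locallyIntegrable
  have hUni (n : ℕ) : Integrable (Un n) := (ψ n).integrable_normed.integrable_convolution _ hui
  have hUn_tendsto := tendsto_integral_norm_normed_convolution_sub hψ hui
  refine le_of_tendsto (((tendsto_integral_lipschitz_comp_mul_of_tendsto hFn_lip hFn_tendsto hUni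
    hui hUn_tendsto hz.integrable_div2 hCz).add
    (tendsto_integral_lipschitz_comp_mul_of_tendsto (F := fun n t => t - Fn n t)
      (f := fun t => t - F t) (fun n => LipschitzWith.id.sub (hFn_lip n))
      (fun t => (hFn_tendsto t).const_sub t) hUni hui hUn_tendsto hw.integrable_div2 hCw)))
    (.of_forall fun n => ?_)
  obtain ⟨ζ, hζ, hζ_eq⟩ := exists_isTestField_integral_comp_add_eq (hFn n)
    (monotone_normed_convolution (φ n) hF_mono) (hFn_lip n) (hUn n) hz hw
  exact hζ_eq.trans_le (hu.integral_normed_convolution_mul_div2_le_TV hui (ψ n) hζ)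

lemma HasBV.comp (hu : HasBV u) (hui : Integrable u) {F : ℝ → ℝ} (hF_mono : Monotone F)
    (hF_lip : LipschitzWith 1 F) : HasBV (F ∘ u) :=
  hasBV_of_forall_le fun z hz => by
    simpa [div2] using hu.integral_comp_add_integral_sub_comp_le_TV hui hF_mono hF_lip hz .zero

lemma HasBV.sub_comp (hu : HasBV u) (hui : Integrable u) {F : ℝ → ℝ} (hF_mono : Monotone F)
    (hF_lip : LipschitzWith 1 F) : HasBV (u - F ∘ u) :=
  hasBV_of_forall_le fun z hz => by
    simpa [div2] using hu.integral_comp_add_integral_sub_comp_le_TV hui hF_mono hF_lip .zero hz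

theorem HasBV.TV_comp_add_TV_sub_comp_le (hu : HasBV u) (hui : Integrable u) {F : ℝ → ℝ}
    (hF_mono : Monotone F) (hF_lip : LipschitzWith 1 F) :
    TV (F ∘ u) + TV (u - F ∘ u) ≤ TV u := by
  rw [← le_sub_iff_add_le]
  refine TV_le fun z hz => ?_
  rw [le_sub_comm]
  refine TV_le fun w hw => ?_
  rw [le_sub_iff_add_le']
  exact hu.integral_comp_add_integral_sub_comp_le_TV hui hF_mono hF_lip hz hw

end TotalVariation

section VanishingVariation

variable {w : E2 → ℝ}

lemma HasBV.integral_mul_fderiv_le_TV (hw : HasBV w) {g : E2 → ℝ} (hg : ContDiff ℝ ∞ g)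
    (hgc : HasCompactSupport g) {v : E2} (hc : ∀ x, ‖g x • v‖ ≤ 1) :
    ∫ x, w x * fderiv ℝ g x v ≤ TV w := by
  have hz : IsTestField (g • fun _ => v) :=
    ⟨hg.smul contDiff_const, hgc.smul_right, hc⟩
  have hdiv (x : E2) : div2 (g • fun _ => v) x = fderiv ℝ g x v := by
    rw [div2_smul (hg.differentiable (by simp)) (differentiable_const v)]
    simp [div2]
  simpa only [hdiv] using hw.integral_mul_div2_le_TV hz

lemma HasBV.integral_mul_fderiv_eq_zero_of_TV_nonpos (hw : HasBV w) (hTV : TV w ≤ 0) {g : E2 → ℝ}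
    (hg : ContDiff ℝ ∞ g) (hgc : HasCompactSupport g) (v : E2) :
    ∫ x, w x * fderiv ℝ g x v = 0 := by
  obtain ⟨C, hC⟩ := hg.continuous.bounded_above_of_compact_support hgc
  have hC₀ : 0 ≤ C := (norm_nonneg _).trans (hC 0)
  have hnonpos (v : E2) : ∫ x, w x * fderiv ℝ g x v ≤ 0 := by
    set r : ℝ := (1 + C * ‖v‖)⁻¹
    have hr : 0 < r := by positivity
    have hle (x : E2) : ‖g x • r • v‖ ≤ 1 := by
      rw [norm_smul, norm_smul, norm_of_nonneg hr.le, mul_left_comm,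
        inv_mul_le_one₀ (by positivity)]
      nlinarith [mul_le_mul_of_nonneg_right (hC x) (norm_nonneg v)]
    have h := (hw.integral_mul_fderiv_le_TV hg hgc hle).trans hTV
    simp only [map_smul, smul_eq_mul, mul_left_comm _ r, integral_const_mul] at h
    exact nonpos_of_mul_nonpos_right h hr
  refine le_antisymm (hnonpos v) ?_
  simpa only [map_neg, mul_neg, integral_neg, Left.neg_nonpos_iff] using hnonpos (-v)

lemma HasBV.convolution_eq_of_TV_nonpos (hw : HasBV w) (hwi : Integrable w) (hTV : TV w ≤ 0)
    {g : E2 → ℝ} (hg : ContDiff ℝ ∞ g) (hgc : HasCompactSupport g) (x y : E2) :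
    (w ⋆[lsmul ℝ ℝ, volume] g) x = (w ⋆[lsmul ℝ ℝ, volume] g) y := by
  have hg₁ : ContDiff ℝ 1 g := hg.of_le (mod_cast le_top)
  have hderiv (x : E2) : HasFDerivAt (w ⋆[lsmul ℝ ℝ, volume] g) (0 : E2 →L[ℝ] ℝ) x := by
    refine (hgc.hasFDerivAt_convolution_right (lsmul ℝ ℝ) hwi.locallyIntegrable hg₁
      x).congr_fderiv (ContinuousLinearMap.ext fun v => ?_)
    have hreflect (t : E2) : fderiv ℝ (fun s => g (x - s)) t v = -fderiv ℝ g (x - t) v := by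
      have hchain : HasFDerivAt (fun s => g (x - s))
          ((fderiv ℝ g (x - t)).comp (-(ContinuousLinearMap.id ℝ E2))) t :=
        (hg₁.differentiable one_ne_zero (x - t)).hasFDerivAt.comp t
          ((hasFDerivAt_id t).const_sub x)
      simp [hchain.fderiv]
    have hzero := hw.integral_mul_fderiv_eq_zero_of_TV_nonpos hTV (g := fun s => g (x - s))
      (hg.comp (contDiff_const.sub contDiff_id)) (hgc.comp_homeomorph (Homeomorph.subLeft x)) v
    simp_rw [hreflect, mul_neg, integral_neg, neg_eq_zero] at hzero
    rw [convolution_precompR_apply _ hwi.locallyIntegrable (hgc.fderiv ℝ)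
      (hg₁.continuous_fderiv one_ne_zero), convolution_def]
    simpa using hzero
  exact is_const_of_fderiv_eq_zero (fun x => (hderiv x).differentiableAt)
    (fun x => (hderiv x).fderiv) x y

theorem HasBV.ae_eq_zero_of_TV_nonpos (hw : HasBV w) (hwi : Integrable w) (hTV : TV w ≤ 0) :
    w =ᵐ[volume] 0 := by
  refine ae_eq_zero_of_integral_contDiff_smul_eq_zero hwi.locallyIntegrable fun g hg hgc => ?_
  have hneg : ContDiff ℝ ∞ fun x => g (-x) := hg.comp contDiff_neg
  have hnegc : HasCompactSupport fun x => g (-x) := hgc.comp_homeomorph (Homeomorph.neg E2)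
  set W := w ⋆[lsmul ℝ ℝ, volume] fun x => g (-x) with hW
  have hWi : Integrable W :=
    hwi.integrable_convolution _ (hneg.continuous.integrable_of_hasCompactSupport hnegc)
  have hW_const : W = fun _ => W 0 := funext fun x =>
    hw.convolution_eq_of_TV_nonpos hwi hTV hneg hnegc x 0
  rw [hW_const, integrable_const_iff] at hWi
  have hW₀ : W 0 = 0 := hWi.resolve_right fun h =>
    h.measure_univ_lt_top.ne (measure_univ_of_isAddLeftInvariant volume)
  simpa [hW, convolution_def, mul_comm] using hW₀

end VanishingVariation

section Truncation

variable {α : Type*} [MeasurableSpace α] {μ : Measure α} {u : α → ℝ} {c : ℝ}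

/-- The map `t ↦ min(t⁺, 1) - c t⁻`, truncating the positive part of `t` at `1` and rescaling its
negative part by `c`. Its composition with the minimizer is the competitor. It is encoded as a
convex combination of two monotone `1`-Lipschitz maps, the cases `c = 0` and `c = 1`. -/
def truncRescale (c t : ℝ) : ℝ := (1 - c) * min (max t 0) 1 + c * min t 1

lemma truncRescale_zero (c : ℝ) : truncRescale c 0 = 0 := by
  simp [truncRescale]

lemma truncRescale_one (c : ℝ) : truncRescale c 1 = 1 := by
  simp [truncRescale]

lemma truncRescale_le_one (hc₀ : 0 ≤ c) (hc₁ : c ≤ 1) (t : ℝ) : truncRescale c t ≤ 1 :=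
  convex_Iic (1 : ℝ) (mem_Iic.2 (min_le_right _ _)) (mem_Iic.2 (min_le_right _ _))
    (sub_nonneg.2 hc₁) hc₀ (sub_add_cancel 1 c)

lemma monotone_truncRescale (hc₀ : 0 ≤ c) (hc₁ : c ≤ 1) : Monotone (truncRescale c) :=
  (((monotone_id.max monotone_const).min monotone_const).const_mul (sub_nonneg.2 hc₁)).add
    ((monotone_id.min monotone_const).const_mul hc₀)

lemma lipschitzWith_one_min_max_zero_one : LipschitzWith 1 fun t : ℝ => min (max t 0) 1 :=
  (LipschitzWith.id.max_const 0).min_const 1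

lemma lipschitzWith_one_min_one : LipschitzWith 1 fun t : ℝ => min t 1 :=
  LipschitzWith.id.min_const 1

lemma lipschitzWith_one_truncRescale (hc₀ : 0 ≤ c) (hc₁ : c ≤ 1) :
    LipschitzWith 1 (truncRescale c) := by
  refine LipschitzWith.of_dist_le_mul fun s t => ?_
  rw [NNReal.coe_one, one_mul]
  calc dist (truncRescale c s) (truncRescale c t)
      ≤ (1 - c) * dist (min (max s 0) 1) (min (max t 0) 1) + c * dist (min s 1) (min t 1) := by
        refine (dist_add_add_le _ _ _ _).trans_eq ?_
        simp only [dist_eq, ← mul_sub, abs_mul, abs_of_nonneg hc₀, abs_of_nonneg (sub_nonneg.2 hc₁)]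
    _ ≤ (1 - c) * dist s t + c * dist s t := by
        have := sub_nonneg.2 hc₁
        gcongr
        · simpa using lipschitzWith_one_min_max_zero_one.dist_le_mul s t
        · simpa using lipschitzWith_one_min_one.dist_le_mul s t
    _ = dist s t := by ring

lemma exists_integral_truncRescale_eq_zero (hu : Integrable u μ) (hu₀ : ∫ x, u x ∂μ = 0) :
    ∃ c ∈ Icc (0 : ℝ) 1, ∫ x, truncRescale c (u x) ∂μ = 0 := by
  have hint₀ : Integrable (fun x => min (max (u x) 0) 1) μ :=
    integrable_lipschitz_comp lipschitzWith_one_min_max_zero_one (by simp) hu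
  have hint₁ : Integrable (fun x => min (u x) 1) μ :=
    integrable_lipschitz_comp lipschitzWith_one_min_one (by simp) hu
  have h₀ : 0 ≤ ∫ x, min (max (u x) 0) 1 ∂μ :=
    integral_nonneg fun x => le_min (le_max_right _ _) zero_le_one
  have h₁ : ∫ x, min (u x) 1 ∂μ ≤ 0 :=
    (integral_mono hint₁ hu fun x => min_le_left _ _).trans_eq hu₀
  obtain ⟨c, b, hc, hb, hcb, hzero⟩ := Icc_subset_segment (𝕜 := ℝ) (mem_Icc.2 ⟨h₁, h₀⟩)
  refine ⟨c, ⟨hc, by linarith⟩, ?_⟩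
  simp only [truncRescale]
  rw [integral_add (hint₀.const_mul _) (hint₁.const_mul _), integral_const_mul,
    integral_const_mul, ← eq_sub_of_add_eq' hcb, add_comm]
  exact hzero

end Truncation

section Minimizer

variable {Ω Ωs : Set E2} {u : E2 → ℝ} {F : ℝ → ℝ}

lemma Admissible.integral_eq_zero (hu : Admissible Ω Ωs u) : ∫ x, u x = 0 :=
  (setIntegral_eq_integral_of_forall_compl_eq_zero hu.2.2.2.2).symm.trans hu.2.2.1

lemma Admissible.comp (hu : Admissible Ω Ωs u) (hF_mono : Monotone F) (hF_lip : LipschitzWith 1 F)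
    (hF₀ : F 0 = 0) (hF₁ : F 1 = 1) (hFu : ∫ x, F (u x) = 0) : Admissible Ω Ωs (F ∘ u) := by
  obtain ⟨hui, hbv, -, hus, huΩ⟩ := hu
  have hFΩ (x : E2) (hx : x ∉ Ω) : F (u x) = 0 := by rw [huΩ x hx, hF₀]
  refine ⟨integrable_lipschitz_comp hF_lip hF₀ hui, hbv.comp hui hF_mono hF_lip, ?_,
    fun x hx => ?_, hFΩ⟩
  · exact (setIntegral_eq_integral_of_forall_compl_eq_zero hFΩ).trans hFu
  · rw [Function.comp_apply, hus x hx, hF₁]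

theorem Admissible.ae_eq_comp_of_forall_TV_le (hu : Admissible Ω Ωs u)
    (hmin : ∀ v, Admissible Ω Ωs v → TV u ≤ TV v) (hF_mono : Monotone F)
    (hF_lip : LipschitzWith 1 F) (hFu : Admissible Ω Ωs (F ∘ u)) : u =ᵐ[volume] F ∘ u := by
  have hsum := hu.2.1.TV_comp_add_TV_sub_comp_le hu.1 hF_mono hF_lip
  have hTV : TV (u - F ∘ u) ≤ 0 := by linarith [hmin _ hFu]
  exact (sub_ae_eq_zero u (F ∘ u)).1 <|
    (hu.2.1.sub_comp hu.1 hF_mono hF_lip).ae_eq_zero_of_TV_nonpos (hu.1.sub hFu.1) hTV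

end Minimizer

theorem stmt4_general (Ω Ωs : Set E2) (u : E2 → ℝ) (hu : Admissible Ω Ωs u)
    (hmin : ∀ v : E2 → ℝ, Admissible Ω Ωs v → TV u ≤ TV v) : ∀ᵐ x : E2 ∂volume, u x ≤ 1 := by
  obtain ⟨c, ⟨hc₀, hc₁⟩, hc⟩ := exists_integral_truncRescale_eq_zero hu.1 hu.integral_eq_zero
  have hmono : Monotone (truncRescale c) := monotone_truncRescale hc₀ hc₁
  have hlip : LipschitzWith 1 (truncRescale c) := lipschitzWith_one_truncRescale hc₀ hc₁
  have hcomp : Admissible Ω Ωs (truncRescale c ∘ u) :=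
    hu.comp hmono hlip (truncRescale_zero c) (truncRescale_one c) hc
  filter_upwards [hu.ae_eq_comp_of_forall_TV_le hmin hmono hlip hcomp] with x hx
  exact hx.trans_le (truncRescale_le_one hc₀ hc₁ (u x))

/-- minimizers of TV over `BV_{⋄,1}` are bounded above by 1. -/
theorem stmt4 (Ω Ωs : Set E2) (hΩo : IsOpen Ω) (hΩb : Bornology.IsBounded Ω)
    (hsub : Ωs ⊆ Ω) (hΩs : 0 < volume Ωs) (u : E2 → ℝ)
    (hu : Admissible Ω Ωs u) (hmin : ∀ v : E2 → ℝ, Admissible Ω Ωs v → TV u ≤ TV v) :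
    ∀ᵐ x : E2 ∂volume, u x ≤ 1 :=
  stmt4_general Ω Ωs u hu hmin

end
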